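/- arXiv:2404.05081 — 2 statements merged into one kernel-verified Lean document; each statement's English description precedes it below -/
import Mathlib

section
/- (Bochner's tube theorem.) Let n ≥ 1, let U ⊆ ℝⁿ be a connected open set, and let T(U) = { z ∈ ℂⁿ : (Re(z₁), …, Re(zₙ)) ∈ U }. If f : ℂⁿ → ℂ is holomorphic on T(U), then there exists a function F holomorphic on T(conv(U)), where conv(U) ⊆ ℝⁿ is the convex hull of U, such that F = f on T(U). -/
/-- The tube over a set `U ⊆ ℝⁿ`: all points of `ℂⁿ` whose vector of real parts lies in `U`. -/
def Tube {n : ℕ} (U : Set (Fin n → ℝ)) : Set (Fin n → ℂ) :=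
  {z | (fun i => (z i).re) ∈ U}

namespace Bochner

open Set Filter Topology MeasureTheory

/-- Vector of real parts. -/
def reV {n : ℕ} (z : Fin n → ℂ) : Fin n → ℝ := fun i => (z i).re

/-- Vector of imaginary parts. -/
def imV {n : ℕ} (z : Fin n → ℂ) : Fin n → ℝ := fun i => (z i).im

/-- The complex vector `x + i y`. -/
noncomputable def cx {n : ℕ} (x y : Fin n → ℝ) : Fin n → ℂ := fun i => ⟨x i, y i⟩

section basics
variable {n : ℕ}

@[simp] lemma reV_cx (x y : Fin n → ℝ) : reV (cx x y) = x := rfl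
@[simp] lemma imV_cx (x y : Fin n → ℝ) : imV (cx x y) = y := rfl
@[simp] lemma cx_reV_imV (z : Fin n → ℂ) : cx (reV z) (imV z) = z := rfl

lemma cx_apply (x y : Fin n → ℝ) (i : Fin n) : cx x y i = (x i : ℂ) + (y i : ℂ) * Complex.I := by
  apply Complex.ext <;> simp [cx]

lemma mem_tube {U : Set (Fin n → ℝ)} {z : Fin n → ℂ} : z ∈ Tube U ↔ reV z ∈ U := Iff.rfl

lemma cx_add (x y x' y' : Fin n → ℝ) : cx (x + x') (y + y') = cx x y + cx x' y' := by
  ext i; apply Complex.ext <;> simp [cx]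

lemma reV_add (z w : Fin n → ℂ) : reV (z + w) = reV z + reV w := by
  ext i; simp [reV]

lemma reV_sub (z w : Fin n → ℂ) : reV (z - w) = reV z - reV w := by
  ext i; simp [reV]

lemma imV_sub (z w : Fin n → ℂ) : imV (z - w) = imV z - imV w := by
  ext i; simp [imV]

lemma continuous_reV : Continuous (reV : (Fin n → ℂ) → (Fin n → ℝ)) := by
  unfold reV; fun_prop

lemma continuous_imV : Continuous (imV : (Fin n → ℂ) → (Fin n → ℝ)) := by
  unfold imV; fun_prop

lemma continuous_cx : Continuous (fun p : (Fin n → ℝ) × (Fin n → ℝ) => cx p.1 p.2) := by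
  refine continuous_pi fun i => ?_
  simp only [cx_apply]; fun_prop

lemma norm_reV_le (z : Fin n → ℂ) : ‖reV z‖ ≤ ‖z‖ := by
  refine (pi_norm_le_iff_of_nonneg (norm_nonneg _)).2 fun i => ?_
  exact (Complex.abs_re_le_norm _).trans (norm_le_pi_norm z i)

lemma norm_imV_le (z : Fin n → ℂ) : ‖imV z‖ ≤ ‖z‖ := by
  refine (pi_norm_le_iff_of_nonneg (norm_nonneg _)).2 fun i => ?_
  exact (Complex.abs_im_le_norm _).trans (norm_le_pi_norm z i)

lemma norm_cx_le (x y : Fin n → ℝ) : ‖cx x y‖ ≤ ‖x‖ + ‖y‖ := by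
  refine (pi_norm_le_iff_of_nonneg (by positivity)).2 fun i => ?_
  rw [cx_apply]
  refine (norm_add_le _ _).trans ?_
  have h1 := norm_le_pi_norm x i
  have h2 := norm_le_pi_norm y i
  simpa using add_le_add h1 h2

lemma norm_cx_zero_le (x : Fin n → ℝ) : ‖cx x 0‖ ≤ ‖x‖ := by
  simpa using norm_cx_le x 0

lemma isOpen_tube {U : Set (Fin n → ℝ)} (hU : IsOpen U) : IsOpen (Tube U) :=
  hU.preimage continuous_reV

lemma tube_mono {U V : Set (Fin n → ℝ)} (h : U ⊆ V) : Tube U ⊆ Tube V := fun _ hz => h hz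

end basics

/-- `K` dominates `L` for entire functions. -/
def Dom {n : ℕ} (K L : Set (Fin n → ℂ)) : Prop :=
  ∀ P : (Fin n → ℂ) → ℂ, Differentiable ℂ P → ∀ M : ℝ, (∀ w ∈ K, ‖P w‖ ≤ M) → ∀ w ∈ L, ‖P w‖ ≤ M

/-- The set of real points dominated by a compact subset of the tube. -/
def Hull {n : ℕ} (U : Set (Fin n → ℝ)) : Set (Fin n → ℝ) :=
  {x | ∃ K, IsCompact K ∧ K ⊆ Tube U ∧ Dom K {cx x 0}}

section hull
variable {n : ℕ} {U : Set (Fin n → ℝ)}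

lemma subset_hull : U ⊆ Hull U := fun x hx =>
  ⟨{cx x 0}, isCompact_singleton, by simpa [mem_tube] using hx, fun _ _ _ h => h⟩

lemma hull_local (hU : IsOpen U) {z : Fin n → ℂ} (hz : z ∈ Tube (Hull U)) :
    ∃ δ > 0, ∃ K, IsCompact K ∧ K ⊆ Tube U ∧ Dom K (Metric.ball z δ) := by
  obtain ⟨K, hK, hKU, hdom⟩ := hz
  obtain ⟨δ, hδ, hsub⟩ := hK.exists_cthickening_subset_open (isOpen_tube hU) hKU
  refine ⟨δ, hδ, (fun w => w + cx 0 (imV z)) '' Metric.cthickening δ K,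
    (hK.cthickening).image (by fun_prop), ?_, ?_⟩
  · rintro _ ⟨w, hw, rfl⟩
    have := hsub hw
    simpa [mem_tube, reV_add] using this
  · intro P hP M hM w hw
    have hz' : z = cx (reV z) 0 + cx 0 (imV z) := by
      rw [← cx_add]; simp
    have key := hdom (fun u => P (u + (w - cx (reV z) 0))) (hP.comp (by fun_prop)) M (by
      intro u hu
      apply hM
      refine ⟨u + (w - z), ?_, ?_⟩
      · apply Metric.mem_cthickening_of_dist_le _ u _ _ hu
        simpa [dist_eq_norm] using (le_of_lt (mem_ball_iff_norm.1 hw))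
      · simp only
        nth_rw 1 [hz']
        abel) (cx (reV z) 0) (mem_singleton _)
    simpa using key

lemma isOpen_hull (hU : IsOpen U) : IsOpen (Hull U) := by
  rw [Metric.isOpen_iff]
  intro x hx
  obtain ⟨δ, hδ, K, hK, hKU, hd⟩ := hull_local hU (z := cx x 0) (by simpa [mem_tube] using hx)
  refine ⟨δ, hδ, fun y hy => ⟨K, hK, hKU, fun P hP M hM w hw => hd P hP M hM w ?_⟩⟩
  rw [mem_singleton_iff.1 hw, Metric.mem_ball, dist_eq_norm]
  have : cx y 0 - cx x 0 = cx (y - x) 0 := by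
    rw [sub_eq_iff_eq_add, ← cx_add]; simp
  rw [this]
  exact (norm_cx_zero_le _).trans_lt (mem_ball_iff_norm.1 hy)

lemma hull_compact (hU : IsOpen U) {L : Set (Fin n → ℂ)} (hL : IsCompact L)
    (hLU : L ⊆ Tube (Hull U)) : ∃ K, IsCompact K ∧ K ⊆ Tube U ∧ Dom K L := by
  refine hL.induction_on (p := fun L => ∃ K, IsCompact K ∧ K ⊆ Tube U ∧ Dom K L) ?_ ?_ ?_ ?_
  · exact ⟨∅, isCompact_empty, empty_subset _, fun _ _ _ _ w hw => absurd hw (by simp)⟩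
  · rintro s t hst ⟨K, hK, h1, h2⟩
    exact ⟨K, hK, h1, fun P hP M hM w hw => h2 P hP M hM w (hst hw)⟩
  · rintro s t ⟨K, hK, h1, h2⟩ ⟨K', hK', h1', h2'⟩
    refine ⟨K ∪ K', hK.union hK', union_subset h1 h1', fun P hP M hM w hw => ?_⟩
    rcases hw with hw | hw
    · exact h2 P hP M (fun w hw => hM w (Or.inl hw)) w hw
    · exact h2' P hP M (fun w hw => hM w (Or.inr hw)) w hw
  · intro z hz
    obtain ⟨δ, hδ, K, h⟩ := hull_local hU (hLU hz)
    exact ⟨_, mem_nhdsWithin_of_mem_nhds (Metric.ball_mem_nhds z hδ), K, h⟩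

/-- An analytic disc with boundary in the tube over the hull has its centre there. -/
lemma hull_disc (hU : IsOpen U) (φ : ℂ → Fin n → ℂ) (hφ : Differentiable ℂ φ)
    (hb : ∀ ζ : ℂ, ‖ζ‖ = 1 → φ ζ ∈ Tube (Hull U)) (x : Fin n → ℝ) (hx : φ 0 = cx x 0) :
    x ∈ Hull U := by
  obtain ⟨K, hK, hKU, hd⟩ := hull_compact hU (L := φ '' Metric.sphere 0 1)
    ((isCompact_sphere _ _).image hφ.continuous) (by
      rintro _ ⟨ζ, hζ, rfl⟩
      exact hb ζ (by simpa using hζ))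
  refine ⟨K, hK, hKU, fun P hP M hM w hw => ?_⟩
  rw [mem_singleton_iff.1 hw, ← hx]
  refine Complex.norm_le_of_forall_mem_frontier_norm_le (f := fun ζ => P (φ ζ))
    (U := Metric.ball (0:ℂ) 1) Metric.isBounded_ball (hP.comp hφ).diffContOnCl ?_
    (subset_closure (by simp))
  intro ζ hζ
  rw [frontier_ball _ one_ne_zero] at hζ
  exact hd P hP M hM _ ⟨ζ, hζ, rfl⟩

end hull

end Bochner

namespace Bochner

open Set Filter Topology MeasureTheory

section loops

instance fact_two_pi : Fact (0 < 2 * Real.pi) := ⟨Real.two_pi_pos⟩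

lemma trig_re (q : C(AddCircle (2 * Real.pi), ℂ))
    (hq : q ∈ Submodule.span ℂ (Set.range (@fourier (2 * Real.pi)))) :
    ∀ c : ℂ, ∃ p : Polynomial ℂ, ∀ θ : ℝ,
      (p.eval (Complex.exp (θ * Complex.I))).re = (c * q (θ : AddCircle (2 * Real.pi))).re := by
  induction hq using Submodule.span_induction with
  | mem x hx =>
    obtain ⟨k, rfl⟩ := hx
    intro c
    have h : ∀ θ : ℝ, fourier k (θ : AddCircle (2 * Real.pi)) = Complex.exp (k * (θ * Complex.I)) := by
      intro θ
      rw [fourier_coe_apply]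
      congr 1
      have := Real.pi_ne_zero
      push_cast
      field_simp
    rcases Int.eq_nat_or_neg k with ⟨m, rfl | rfl⟩
    · refine ⟨Polynomial.C c * Polynomial.X ^ m, fun θ => ?_⟩
      rw [h]
      simp [← Complex.exp_nat_mul]
    · refine ⟨Polynomial.C ((starRingEnd ℂ) c) * Polynomial.X ^ m, fun θ => ?_⟩
      rw [h]
      rw [← Complex.conj_re]
      simp [← Complex.exp_nat_mul, ← Complex.exp_conj, -Complex.mul_re]
  | zero => intro c; exact ⟨0, by simp⟩
  | add x y _ _ hx hy =>
    intro c
    obtain ⟨p, hp⟩ := hx c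
    obtain ⟨p', hp'⟩ := hy c
    refine ⟨p + p', fun θ => ?_⟩
    simp only [Polynomial.eval_add, Complex.add_re, hp, hp', ContinuousMap.add_apply, mul_add]
  | smul a x _ hx =>
    intro c
    obtain ⟨p, hp⟩ := hx (c * a)
    refine ⟨p, fun θ => ?_⟩
    rw [hp]; simp [mul_assoc, -Complex.mul_re]

lemma trig_approx (α : C(AddCircle (2 * Real.pi), ℝ)) {ε : ℝ} (hε : 0 < ε) :
    ∃ p : Polynomial ℂ, ∀ θ : ℝ, |(p.eval (Complex.exp (θ * Complex.I))).re - α θ| < ε := by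
  let αc : C(AddCircle (2 * Real.pi), ℂ) := ⟨fun t => (α t : ℂ), by fun_prop⟩
  have hmem : αc ∈ (Submodule.span ℂ (Set.range (@fourier (2 * Real.pi)))).topologicalClosure := by
    rw [span_fourier_closure_eq_top]; trivial
  obtain ⟨q, hq, hd⟩ := Metric.mem_closure_iff.1 hmem ε hε
  obtain ⟨p, hp⟩ := trig_re q hq 1
  refine ⟨p, fun θ => ?_⟩
  rw [hp, one_mul]
  have h1 : dist (αc θ) (q θ) < ε := (ContinuousMap.dist_apply_le_dist _).trans_lt hd
  rw [dist_comm, dist_eq_norm] at h1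
  have h2 := (Complex.abs_re_le_norm (q θ - αc θ)).trans_lt h1
  simpa [αc] using h2

lemma poly_mean (p : Polynomial ℂ) :
    2 * Real.pi * (p.eval 0).re = ∫ θ in (-Real.pi)..Real.pi, (p.eval (Complex.exp (θ * Complex.I))).re := by
  have h := DiffContOnCl.circleAverage (f := fun z => p.eval z) (c := 0) (R := 1)
    (p.differentiable.diffContOnCl)
  have hper : Function.Periodic (fun θ : ℝ => p.eval (circleMap 0 1 θ)) (2 * Real.pi) := fun θ => by
    simp [periodic_circleMap 0 1 θ]
  have hc : Continuous (fun θ : ℝ => p.eval (circleMap 0 1 θ)) := by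
    exact p.continuous.comp (continuous_circleMap _ _)
  have h3 := hper.intervalIntegral_add_eq (-Real.pi) 0
  rw [show -Real.pi + 2 * Real.pi = Real.pi by ring, zero_add] at h3
  rw [Real.circleAverage, ← h3] at h
  have h4 : ∫ θ in (-Real.pi)..Real.pi, p.eval (circleMap 0 1 θ) = (2 * Real.pi : ℝ) • p.eval 0 := by
    rw [← h, smul_smul, mul_inv_cancel₀ (by positivity), one_smul]
  have h5 := congrArg Complex.reCLM h4
  rw [← ContinuousLinearMap.intervalIntegral_comp_comm _ (hc.intervalIntegrable _ _)] at h5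
  simp only [Complex.reCLM_apply, Complex.real_smul, Complex.re_ofReal_mul] at h5
  rw [← h5]
  simp [circleMap]

lemma trig_approx_mean (α : C(AddCircle (2 * Real.pi), ℝ)) {ε : ℝ} (hε : 0 < ε) :
    ∃ p : Polynomial ℂ, (∀ θ : ℝ, |(p.eval (Complex.exp (θ * Complex.I))).re - α θ| < ε) ∧
      |2 * Real.pi * (p.eval 0).re - ∫ θ in (-Real.pi)..Real.pi, α θ| ≤ 2 * Real.pi * ε := by
  obtain ⟨p, hp⟩ := trig_approx α hε
  refine ⟨p, hp, ?_⟩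
  have hc1 : Continuous fun θ : ℝ => (p.eval (Complex.exp (θ * Complex.I))).re :=
    Complex.continuous_re.comp (p.continuous.comp (by fun_prop))
  have hc2 : Continuous fun θ : ℝ => α θ :=
    α.continuous.comp (AddCircle.continuous_mk' _)
  rw [poly_mean, ← intervalIntegral.integral_sub (hc1.intervalIntegrable _ _)
    (hc2.intervalIntegrable _ _)]
  have := intervalIntegral.norm_integral_le_of_norm_le_const (a := -Real.pi) (b := Real.pi) (C := ε)
    (f := fun θ : ℝ => (p.eval (Complex.exp (θ * Complex.I))).re - α θ) (fun θ _ => (hp θ).le)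
  rw [Real.norm_eq_abs, sub_neg_eq_add,
    abs_of_pos (by linarith [Real.pi_pos] : 0 < Real.pi + Real.pi)] at this
  linarith

/-- clipping to `[0,1]`. -/
noncomputable def clip (t : ℝ) : ℝ := max 0 (min 1 t)

lemma continuous_clip : Continuous clip := by unfold clip; fun_prop
lemma clip_nonneg (t : ℝ) : 0 ≤ clip t := le_max_left _ _
lemma clip_le_one (t : ℝ) : clip t ≤ 1 := max_le zero_le_one (min_le_left _ _)
lemma clip_of_nonpos {t : ℝ} (h : t ≤ 0) : clip t = 0 :=
  max_eq_left ((min_le_right _ _).trans h)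
lemma clip_of_one_le {t : ℝ} (h : 1 ≤ t) : clip t = 1 := by
  simp [clip, min_eq_left h]

lemma clip_tendsto (u : ℝ) (hu : u ≠ 0) :
    Tendsto (fun k : ℕ => clip (k * u)) atTop (𝓝 (if 0 < u then 1 else 0)) := by
  split_ifs with h
  · apply tendsto_const_nhds.congr'
    obtain ⟨N, hN⟩ := exists_nat_ge (1 / u)
    filter_upwards [eventually_ge_atTop N] with k hk
    rw [clip_of_one_le]
    have : 1 / u ≤ k := hN.trans (by exact_mod_cast hk)
    rwa [div_le_iff₀ h] at this
  · apply tendsto_const_nhds.congr'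
    refine Eventually.of_forall fun k => ?_
    symm
    apply clip_of_nonpos
    exact mul_nonpos_of_nonneg_of_nonpos (by positivity) (not_lt.1 h)

lemma mean_tendsto (g : ℝ → ℝ) (hg : Continuous g) (h0 : ∀ᵐ θ : ℝ, g θ ≠ 0) :
    Tendsto (fun k : ℕ => ∫ θ in (-Real.pi)..Real.pi, clip (k * g θ)) atTop
      (𝓝 (∫ θ in (-Real.pi)..Real.pi, if 0 < g θ then (1:ℝ) else 0)) := by
  refine intervalIntegral.tendsto_integral_filter_of_dominated_convergence (fun _ => 1) ?_ ?_ ?_ ?_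
  · refine Eventually.of_forall fun k => ?_
    exact (continuous_clip.comp (by fun_prop)).aestronglyMeasurable
  · refine Eventually.of_forall fun k => Eventually.of_forall fun θ _ => ?_
    rw [Real.norm_eq_abs, abs_of_nonneg (clip_nonneg _)]
    exact clip_le_one _
  · exact intervalIntegrable_const
  · filter_upwards [h0] with θ hθ _
    exact clip_tendsto _ hθ

lemma ae_ne_abs (a : ℝ) : ∀ᵐ θ : ℝ, a - |θ| ≠ 0 := by
  have : ({a, -a} : Set ℝ)ᶜ ∈ ae (volume : Measure ℝ) :=
    (Set.toFinite {a, -a}).measure_zero volume |> compl_mem_ae_iff.2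
  filter_upwards [this] with θ hθ h
  apply hθ
  rcases abs_choice θ with h' | h'
  · left; linarith
  · right; simp; linarith

lemma integral_ind (a : ℝ) (ha : 0 ≤ a) (ha' : a ≤ Real.pi) :
    (∫ θ in (-Real.pi)..Real.pi, if 0 < a - |θ| then (1:ℝ) else 0) = 2 * a := by
  have : (fun θ : ℝ => if 0 < a - |θ| then (1:ℝ) else 0) = indicator (Ioo (-a) a) 1 := by
    ext θ
    simp only [indicator, mem_Ioo, ← abs_lt, sub_pos, Pi.one_apply]
  rw [this, intervalIntegral.integral_of_le (by linarith [Real.pi_pos]),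
    integral_indicator_one measurableSet_Ioo, measureReal_restrict_apply measurableSet_Ioo,
    inter_eq_left.2]
  · rw [Measure.real, Real.volume_Ioo, ENNReal.toReal_ofReal (by linarith)]; ring
  · intro x hx
    exact ⟨by linarith [hx.1], by linarith [hx.2]⟩

lemma integral_ind' (a : ℝ) (ha : 0 ≤ a) (ha' : a ≤ Real.pi) :
    (∫ θ in (-Real.pi)..Real.pi, if 0 < |θ| - a then (1:ℝ) else 0) = 2 * Real.pi - 2 * a := by
  have h1 : (∫ θ in (-Real.pi)..Real.pi, if 0 < |θ| - a then (1:ℝ) else 0) =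
      ∫ θ in (-Real.pi)..Real.pi, (1 - if 0 < a - |θ| then (1:ℝ) else 0) := by
    apply intervalIntegral.integral_congr_ae
    filter_upwards [ae_ne_abs a] with θ hθ _
    rcases lt_or_gt_of_ne hθ with h | h
    · rw [if_pos (by linarith), if_neg (by linarith)]; simp
    · rw [if_neg (by linarith), if_pos (by linarith)]; simp
  rw [h1, intervalIntegral.integral_sub, integral_ind a ha ha']
  · simp; ring
  · exact intervalIntegrable_const
  · have : (fun θ : ℝ => if 0 < a - |θ| then (1:ℝ) else 0) = indicator (Ioo (-a) a) 1 := by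
      ext θ
      simp only [indicator, mem_Ioo, ← abs_lt, sub_pos, Pi.one_apply]
    rw [this]
    refine (intervalIntegrable_const (c := (1:ℝ))).mono_fun ?_ ?_
    · exact (measurable_one.indicator measurableSet_Ioo).aestronglyMeasurable
    · refine Eventually.of_forall fun x => ?_
      exact norm_indicator_le_norm_self _ _

/-- The analytic disc with boundary close to an L-shape. -/
lemma exists_disc_aux (l : ℝ) (h0 : 0 ≤ l) (h1 : l ≤ 1) {ε : ℝ} (hε : 0 < ε) :
    ∃ p q : ℂ → ℂ, Differentiable ℂ p ∧ Differentiable ℂ q ∧ p 0 = ((1 - l : ℝ) : ℂ) ∧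
      q 0 = (l : ℂ) ∧ ∀ ζ : ℂ, ‖ζ‖ = 1 → ∃ s t : ℝ, 0 ≤ s ∧ s ≤ 1 ∧ 0 ≤ t ∧ t ≤ 1 ∧
        (s = 0 ∨ t = 0) ∧ |(p ζ).re - s| < 3 * ε ∧ |(q ζ).re - t| < 3 * ε := by
  have hpi := Real.pi_pos
  set a : ℝ := Real.pi * (1 - l) with ha
  have ha0 : 0 ≤ a := mul_nonneg hpi.le (by linarith)
  have ha1 : a ≤ Real.pi := by nlinarith
  have t1 := mean_tendsto (fun θ => a - |θ|) (by fun_prop) (ae_ne_abs a)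
  have t2 := mean_tendsto (fun θ => |θ| - a) (by fun_prop) (by
    filter_upwards [ae_ne_abs a] with θ hθ h
    exact hθ (by linarith))
  rw [integral_ind a ha0 ha1] at t1
  rw [integral_ind' a ha0 ha1] at t2
  obtain ⟨k, hk1, hk2⟩ := ((Metric.tendsto_nhds.1 t1 ε hε).and (Metric.tendsto_nhds.1 t2 ε hε)).exists
  rw [Real.dist_eq] at hk1 hk2
  let α : C(AddCircle (2 * Real.pi), ℝ) := ⟨fun t => clip (k * (a - ‖t‖)),
    continuous_clip.comp (by fun_prop)⟩
  let β : C(AddCircle (2 * Real.pi), ℝ) := ⟨fun t => clip (k * (‖t‖ - a)),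
    continuous_clip.comp (by fun_prop)⟩
  have hnorm : ∀ θ ∈ Set.uIcc (-Real.pi) Real.pi, ‖(θ : AddCircle (2 * Real.pi))‖ = |θ| := by
    intro θ hθ
    rw [Set.uIcc_of_le (by linarith)] at hθ
    rw [AddCircle.norm_coe_eq_abs_iff _ (by positivity), abs_of_pos (by positivity : 0 < 2 * Real.pi)]
    rw [abs_le]
    constructor <;> linarith [hθ.1, hθ.2]
  have hα : ∫ θ in (-Real.pi)..Real.pi, α θ = ∫ θ in (-Real.pi)..Real.pi, clip (k * (a - |θ|)) := by
    apply intervalIntegral.integral_congr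
    intro θ hθ
    simp only [α, ContinuousMap.coe_mk, hnorm θ hθ]
  have hβ : ∫ θ in (-Real.pi)..Real.pi, β θ = ∫ θ in (-Real.pi)..Real.pi, clip (k * (|θ| - a)) := by
    apply intervalIntegral.integral_congr
    intro θ hθ
    simp only [β, ContinuousMap.coe_mk, hnorm θ hθ]
  obtain ⟨p, hp, hpm⟩ := trig_approx_mean α hε
  obtain ⟨q, hq, hqm⟩ := trig_approx_mean β hε
  rw [hα] at hpm
  rw [hβ] at hqm
  have hpi3 := Real.pi_gt_three
  have e1 : |(p.eval 0).re - (1 - l)| < 2 * ε := by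
    have : |2 * Real.pi * ((p.eval 0).re - (1 - l))| ≤ 2 * Real.pi * ε + ε := by
      have h : 2 * Real.pi * ((p.eval 0).re - (1 - l)) =
        (2 * Real.pi * (p.eval 0).re - ∫ θ in (-Real.pi)..Real.pi, clip (k * (a - |θ|))) +
        ((∫ θ in (-Real.pi)..Real.pi, clip (k * (a - |θ|))) - 2 * a) := by rw [ha]; ring
      rw [h]
      exact (abs_add_le _ _).trans (add_le_add hpm hk1.le)
    rw [abs_mul, abs_of_pos (by positivity : 0 < 2 * Real.pi)] at this
    nlinarith
  have e2 : |(q.eval 0).re - l| < 2 * ε := by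
    have : |2 * Real.pi * ((q.eval 0).re - l)| ≤ 2 * Real.pi * ε + ε := by
      have h : 2 * Real.pi * ((q.eval 0).re - l) =
        (2 * Real.pi * (q.eval 0).re - ∫ θ in (-Real.pi)..Real.pi, clip (k * (|θ| - a))) +
        ((∫ θ in (-Real.pi)..Real.pi, clip (k * (|θ| - a))) - (2 * Real.pi - 2 * a)) := by
          rw [ha]; ring
      rw [h]
      exact (abs_add_le _ _).trans (add_le_add hqm hk2.le)
    rw [abs_mul, abs_of_pos (by positivity : 0 < 2 * Real.pi)] at this
    nlinarith
  refine ⟨fun ζ => p.eval ζ - p.eval 0 + ((1 - l : ℝ) : ℂ), fun ζ => q.eval ζ - q.eval 0 + (l : ℂ),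
    (p.differentiable.sub_const _).add_const _, (q.differentiable.sub_const _).add_const _,
    by simp, by simp, fun ζ hζ => ?_⟩
  have hζ' : ζ = Complex.exp (Complex.arg ζ * Complex.I) := by
    conv_lhs => rw [← Complex.norm_mul_exp_arg_mul_I ζ, hζ]
    simp
  have hp' := hp (Complex.arg ζ)
  have hq' := hq (Complex.arg ζ)
  rw [← hζ'] at hp' hq'
  refine ⟨α (Complex.arg ζ : ℝ), β (Complex.arg ζ : ℝ), clip_nonneg _, clip_le_one _,
    clip_nonneg _, clip_le_one _, ?_, ?_, ?_⟩
  · rcases le_total (a - ‖((Complex.arg ζ : ℝ) : AddCircle (2 * Real.pi))‖) 0 with h | h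
    · left
      exact clip_of_nonpos (mul_nonpos_of_nonneg_of_nonpos (by positivity) h)
    · right
      exact clip_of_nonpos (mul_nonpos_of_nonneg_of_nonpos (by positivity) (by linarith))
  · simp only [Complex.add_re, Complex.sub_re, Complex.ofReal_re]
    rw [abs_lt] at *
    constructor <;> linarith [hp'.1, hp'.2, e1.1, e1.2]
  · simp only [Complex.add_re, Complex.sub_re, Complex.ofReal_re]
    rw [abs_lt] at *
    constructor <;> linarith [hq'.1, hq'.2, e2.1, e2.2]

lemma exists_disc (l : ℝ) (h0 : 0 ≤ l) (h1 : l ≤ 1) {ε : ℝ} (hε : 0 < ε) :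
    ∃ p q : ℂ → ℂ, Differentiable ℂ p ∧ Differentiable ℂ q ∧ p 0 = ((1 - l : ℝ) : ℂ) ∧
      q 0 = (l : ℂ) ∧ ∀ ζ : ℂ, ‖ζ‖ = 1 → ∃ s t : ℝ, 0 ≤ s ∧ s ≤ 1 ∧ 0 ≤ t ∧ t ≤ 1 ∧
        (s = 0 ∨ t = 0) ∧ |(p ζ).re - s| < ε ∧ |(q ζ).re - t| < ε := by
  have := exists_disc_aux l h0 h1 (ε := ε / 3) (by positivity)
  rwa [mul_div_cancel₀ _ (by norm_num : (3:ℝ) ≠ 0)] at this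

end loops

section convexity
variable {n : ℕ} {U : Set (Fin n → ℝ)}

lemma hull_triangle (hU : IsOpen U) {a b c : Fin n → ℝ} (hab : segment ℝ a b ⊆ Hull U)
    (hbc : segment ℝ b c ⊆ Hull U) : segment ℝ a c ⊆ Hull U := by
  rintro x ⟨u, l, hu, hl, hul, rfl⟩
  have hu' : u = 1 - l := by linarith
  subst hu'
  have hS : IsCompact (segment ℝ a b ∪ segment ℝ b c) := by
    refine IsCompact.union ?_ ?_
    · rw [segment_eq_image_lineMap]; exact isCompact_Icc.image (by fun_prop)
    · rw [segment_eq_image_lineMap]; exact isCompact_Icc.image (by fun_prop)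
  obtain ⟨δ, hδ, hsub⟩ := hS.exists_cthickening_subset_open (isOpen_hull hU) (union_subset hab hbc)
  set D : ℝ := ‖a - b‖ + ‖c - b‖ + 1 with hD
  have hDpos : 0 < D := by positivity
  obtain ⟨p, q, hp, hq, hp0, hq0, hb⟩ := exists_disc l hl (by linarith) (ε := δ / D) (by positivity)
  refine hull_disc hU (fun ζ => cx b 0 + (p ζ) • cx (a - b) 0 + (q ζ) • cx (c - b) 0)
    (by fun_prop) ?_ _ ?_
  · intro ζ hζ
    obtain ⟨s, t, hs0, hs1, ht0, ht1, hst, hps, hqt⟩ := hb ζ hζ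
    apply hsub
    have hre : reV (cx b 0 + (p ζ) • cx (a - b) 0 + (q ζ) • cx (c - b) 0) =
        b + (p ζ).re • (a - b) + (q ζ).re • (c - b) := by
      ext i; simp [reV, cx]
    change reV _ ∈ _
    rw [hre]
    apply Metric.mem_cthickening_of_dist_le _ (b + s • (a - b) + t • (c - b))
    · rcases hst with rfl | rfl
      · right
        refine ⟨1 - t, t, by linarith, ht0, by ring, ?_⟩
        ext i; simp; ring
      · left
        refine ⟨s, 1 - s, hs0, by linarith, by ring, ?_⟩
        ext i; simp; ring
    · rw [dist_eq_norm]
      have : b + (p ζ).re • (a - b) + (q ζ).re • (c - b) - (b + s • (a - b) + t • (c - b)) =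
          ((p ζ).re - s) • (a - b) + ((q ζ).re - t) • (c - b) := by
        ext i; simp; ring
      rw [this]
      calc _ ≤ ‖((p ζ).re - s) • (a - b)‖ + ‖((q ζ).re - t) • (c - b)‖ := norm_add_le _ _
        _ ≤ δ / D * ‖a - b‖ + δ / D * ‖c - b‖ := by
          rw [norm_smul, norm_smul]
          simp only [Real.norm_eq_abs]
          gcongr
        _ ≤ δ / D * D := by
          rw [← mul_add]
          gcongr
          linarith
        _ = δ := by field_simp
  · simp only [hp0, hq0]
    ext i
    simp [cx_apply]
    ring

lemma convexHull_subset_hull (hU : IsOpen U) (hc : IsConnected U) : convexHull ℝ U ⊆ Hull U := by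
  obtain ⟨x0, hx0⟩ := hc.nonempty
  have hR : ∀ x ∈ U, segment ℝ x0 x ⊆ Hull U := by
    intro x hx
    refine hc.isPreconnected.induction₂ (fun x y => segment ℝ x y ⊆ Hull U) ?_ ?_ ?_ hx0 hx
    · intro x hx
      obtain ⟨δ, hδ, hb⟩ := Metric.isOpen_iff.1 hU x hx
      filter_upwards [mem_nhdsWithin_of_mem_nhds (Metric.ball_mem_nhds x hδ)] with y hy
      exact ((convex_ball x δ).segment_subset (Metric.mem_ball_self hδ) hy).trans
        (hb.trans subset_hull)
    · intro x y z _ _ _ h1 h2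
      exact hull_triangle hU h1 h2
    · intro x y _ _ h
      rwa [segment_symm]
  have hconv : Convex ℝ {x | segment ℝ x0 x ⊆ Hull U} := by
    rw [convex_iff_segment_subset]
    intro x hx y hy z hz
    have hxy : segment ℝ x y ⊆ Hull U :=
      hull_triangle hU (by rw [segment_symm]; exact hx) hy
    exact hull_triangle hU hx (((convex_segment x y).segment_subset (left_mem_segment ℝ x y) hz).trans hxy)
  exact (convexHull_min hR hconv).trans fun x hx => hx (right_mem_segment ℝ x0 x)

end convexity

end Bochner

namespace Bochner

open Set Filter Topology MeasureTheory

section limit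
variable {n : ℕ}

lemma cauchy_est {E : Type*} [NormedAddCommGroup E] [NormedSpace ℂ E] {h : E → ℂ} {z : E} {δ M : ℝ}
    (hδ : 0 < δ) (hh : DifferentiableOn ℂ h (Metric.ball z δ))
    (hM : ∀ w ∈ Metric.ball z δ, ‖h w‖ ≤ M) : ‖fderiv ℂ h z‖ ≤ 2 * M / δ := by
  refine Complex.norm_fderiv_le_div_of_mapsTo_ball hh (fun w hw => ?_) hδ
  rw [mem_closedBall_iff_norm]
  refine (norm_sub_le _ _).trans ?_
  linarith [hM w hw, hM z (Metric.mem_ball_self hδ)]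

lemma exists_exhaustion {O : Set (Fin n → ℂ)} (hO : IsOpen O) :
    ∃ K : ℕ → Set (Fin n → ℂ), (∀ k, IsCompact (K k)) ∧ (∀ k, K k ⊆ O) ∧
      ∀ L, IsCompact L → L ⊆ O → ∃ k0, ∀ k ≥ k0, L ⊆ K k := by
  haveI : LocallyCompactSpace O := hO.locallyCompactSpace
  let E : CompactExhaustion O := CompactExhaustion.choice O
  refine ⟨fun k => Subtype.val '' E k, fun k => (E.isCompact k).image continuous_subtype_val,
    fun k => by rintro _ ⟨x, _, rfl⟩; exact x.2, fun L hL hLO => ?_⟩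
  have hL' : IsCompact ((Subtype.val : O → _) ⁻¹' L) := by
    rw [Subtype.isCompact_iff, Subtype.image_preimage_coe, inter_eq_right.2 hLO]
    exact hL
  obtain ⟨k0, hk0⟩ := E.exists_superset_of_isCompact hL'
  refine ⟨k0, fun k hk x hx => ⟨⟨x, hLO hx⟩, E.subset hk (hk0 hx), rfl⟩⟩

/-- A sequence of entire functions that is uniformly Cauchy on compact subsets of an open set
has a holomorphic limit. -/
lemma exists_limit {O : Set (Fin n → ℂ)} (hO : IsOpen O) (P : ℕ → (Fin n → ℂ) → ℂ)
    (hP : ∀ k, Differentiable ℂ (P k))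
    (hC : ∀ L, IsCompact L → L ⊆ O → ∀ ε > 0, ∃ N, ∀ j ≥ N, ∀ k ≥ N, ∀ z ∈ L,
      ‖P j z - P k z‖ ≤ ε) :
    ∃ F : (Fin n → ℂ) → ℂ, DifferentiableOn ℂ F O ∧
      ∀ z ∈ O, Tendsto (fun k => P k z) atTop (𝓝 (F z)) := by
  have hD : ∀ L, IsCompact L → L ⊆ O → UniformCauchySeqOn (fun k => fderiv ℂ (P k)) atTop L := by
    intro L hL hLO
    obtain ⟨δ, hδ, hsub⟩ := hL.exists_cthickening_subset_open hO hLO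
    rw [Metric.uniformCauchySeqOn_iff]
    intro ε hε
    obtain ⟨N, hN⟩ := hC _ hL.cthickening hsub (ε * δ / 4) (by positivity)
    refine ⟨N, fun j hj k hk z hz => ?_⟩
    have := cauchy_est (h := fun w => P j w - P k w) (z := z) (M := ε * δ / 4) hδ
      ((hP j).sub (hP k)).differentiableOn (fun w hw => hN j hj k hk w
        (Metric.mem_cthickening_of_dist_le _ _ _ _ hz (Metric.mem_ball.1 hw).le))
    rw [fderiv_fun_sub (hP j z) (hP k z)] at this
    rw [dist_eq_norm]
    refine this.trans_lt ?_
    rw [div_lt_iff₀ hδ]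
    nlinarith [mul_pos hε hδ]
  have h1 : ∀ z, ∃ w, z ∈ O → Tendsto (fun k => P k z) atTop (𝓝 w) := by
    intro z
    by_cases hz : z ∈ O
    · have : CauchySeq fun k => P k z := by
        rw [Metric.cauchySeq_iff]
        intro ε hε
        obtain ⟨N, hN⟩ := hC {z} isCompact_singleton (by simpa using hz) (ε / 2) (by positivity)
        refine ⟨N, fun j hj k hk => ?_⟩
        rw [dist_eq_norm]
        linarith [hN j hj k hk z rfl]
      obtain ⟨w, hw⟩ := cauchySeq_tendsto_of_complete this
      exact ⟨w, fun _ => hw⟩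
    · exact ⟨0, fun h => absurd h hz⟩
  have h2 : ∀ z, ∃ w, z ∈ O → Tendsto (fun k => fderiv ℂ (P k) z) atTop (𝓝 w) := by
    intro z
    by_cases hz : z ∈ O
    · have : CauchySeq fun k => fderiv ℂ (P k) z :=
        (hD {z} isCompact_singleton (by simpa using hz)).cauchySeq rfl
      obtain ⟨w, hw⟩ := cauchySeq_tendsto_of_complete this
      exact ⟨w, fun _ => hw⟩
    · exact ⟨0, fun h => absurd h hz⟩
  choose F hF using h1
  choose F' hF' using h2
  refine ⟨F, ?_, fun z hz => hF z hz⟩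
  intro z hz
  have hloc : TendstoLocallyUniformlyOn (fun k => fderiv ℂ (P k)) F' atTop O := by
    rw [tendstoLocallyUniformlyOn_iff_forall_isCompact hO]
    intro L hLO hL
    exact (hD L hL hLO).tendstoUniformlyOn_of_tendsto fun z hz => hF' z (hLO hz)
  exact (hasFDerivAt_of_tendstoLocallyUniformlyOn hO hloc
    (fun k x _ => (hP k x).hasFDerivAt) (fun x hx => hF x hx) hz).differentiableAt.differentiableWithinAt

lemma extend_of_approx {U : Set (Fin n → ℝ)} (hU : IsOpen U) (hc : IsConnected U)
    (f : (Fin n → ℂ) → ℂ)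
    (happ : ∀ K, IsCompact K → K ⊆ Tube U → ∀ ε > 0, ∃ P : (Fin n → ℂ) → ℂ,
      Differentiable ℂ P ∧ ∀ z ∈ K, ‖P z - f z‖ ≤ ε) :
    ∃ F : (Fin n → ℂ) → ℂ,
      DifferentiableOn ℂ F (Tube (convexHull ℝ U)) ∧ Set.EqOn F f (Tube U) := by
  obtain ⟨K, hK, hKU, hKL⟩ := exists_exhaustion (isOpen_tube hU)
  have happ' : ∀ k : ℕ, ∃ P : (Fin n → ℂ) → ℂ,
      Differentiable ℂ P ∧ ∀ z ∈ K k, ‖P z - f z‖ ≤ 1 / ((k : ℝ) + 1) :=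
    fun k => happ _ (hK k) (hKU k) _ (by positivity)
  choose P hP hPf using happ'
  have hPL : ∀ L, IsCompact L → L ⊆ Tube U → ∀ ε > 0, ∃ N, ∀ k ≥ N, ∀ z ∈ L, ‖P k z - f z‖ ≤ ε := by
    intro L hL hLU ε hε
    obtain ⟨k0, hk0⟩ := hKL L hL hLU
    obtain ⟨m, hm⟩ := exists_nat_one_div_lt hε
    refine ⟨max k0 m, fun k hk z hz => ?_⟩
    refine (hPf k z (hk0 k ((le_max_left _ _).trans hk) hz)).trans (le_trans ?_ hm.le)
    have : (m : ℝ) ≤ k := by exact_mod_cast (le_max_right _ _).trans hk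
    gcongr
  obtain ⟨F, hF, hlim⟩ := exists_limit (isOpen_tube (hU.convexHull)) P hP (by
    intro L hL hLO ε hε
    obtain ⟨K', hK', hKU', hdom⟩ := hull_compact hU hL (hLO.trans (tube_mono (convexHull_subset_hull hU hc)))
    obtain ⟨N, hN⟩ := hPL K' hK' hKU' (ε / 2) (by positivity)
    refine ⟨N, fun j hj k hk => hdom (fun z => P j z - P k z) ((hP j).sub (hP k)) ε fun w hw => ?_⟩
    have h1 := hN j hj w hw
    have h2 := hN k hk w hw
    have : P j w - P k w = (P j w - f w) - (P k w - f w) := by ring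
    rw [this]
    refine (norm_sub_le _ _).trans ?_
    linarith)
  refine ⟨F, hF, fun z hz => ?_⟩
  refine tendsto_nhds_unique (hlim z (tube_mono (subset_convexHull ℝ U) hz)) ?_
  rw [Metric.tendsto_atTop]
  intro ε hε
  obtain ⟨N, hN⟩ := hPL {z} isCompact_singleton (by simpa using hz) (ε / 2) (by positivity)
  refine ⟨N, fun k hk => ?_⟩
  rw [dist_eq_norm]
  linarith [hN k hk z rfl]

end limit

end Bochner

namespace Bochner

open Set Filter Topology MeasureTheory

section approx
variable {n : ℕ}

lemma continuousOn_fderiv {E : Type*} [NormedAddCommGroup E] [NormedSpace ℂ E] [ProperSpace E]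
    {O : Set E} (hO : IsOpen O) {g : E → ℂ}
    (hg : DifferentiableOn ℂ g O) : ContinuousOn (fderiv ℂ g) O := by
  intro z hz
  apply ContinuousAt.continuousWithinAt
  obtain ⟨δ, hδ, hsub⟩ := Metric.nhds_basis_closedBall.mem_iff.1 (hO.mem_nhds hz)
  have hu := (isCompact_closedBall z δ).uniformContinuousOn_of_continuous
    (hg.continuousOn.mono hsub)
  rw [Metric.uniformContinuousOn_iff] at hu
  rw [Metric.continuousAt_iff]
  intro ε hε
  obtain ⟨δ', hδ', hu'⟩ := hu (ε * δ / 8) (by positivity)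
  refine ⟨min δ' (δ / 2), by positivity, fun w hw => ?_⟩
  have hw1 : dist w z < δ' := hw.trans_le (min_le_left _ _)
  have hw2 : dist w z < δ / 2 := hw.trans_le (min_le_right _ _)
  have hin : ∀ ζ ∈ Metric.ball z (δ / 2), ζ ∈ Metric.closedBall z δ ∧
      ζ + (w - z) ∈ Metric.closedBall z δ := by
    intro ζ hζ
    rw [Metric.mem_ball] at hζ
    constructor
    · rw [Metric.mem_closedBall]; linarith
    · rw [Metric.mem_closedBall, dist_eq_norm] at *
      have : ζ + (w - z) - z = (ζ - z) + (w - z) := by abel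
      rw [this]
      linarith [norm_add_le (ζ - z) (w - z)]
  have hdiff : ∀ ζ ∈ Metric.ball z (δ / 2), DifferentiableAt ℂ g ζ ∧
      DifferentiableAt ℂ (fun ζ => g (ζ + (w - z))) ζ := by
    intro ζ hζ
    refine ⟨hg.differentiableAt (hO.mem_nhds (hsub (hin ζ hζ).1)), ?_⟩
    have := hg.differentiableAt (hO.mem_nhds (hsub (hin ζ hζ).2))
    exact (differentiableAt_comp_add_right _).2 this
  have key := cauchy_est (h := fun ζ => g (ζ + (w - z)) - g ζ) (z := z) (δ := δ / 2)
    (M := ε * δ / 8) (by positivity)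
    (fun ζ hζ => ((hdiff ζ hζ).2.sub (hdiff ζ hζ).1).differentiableWithinAt) (by
      intro ζ hζ
      rw [← dist_eq_norm]
      refine (hu' _ (hin ζ hζ).2 _ (hin ζ hζ).1 ?_).le
      rw [dist_eq_norm] at *
      simpa using hw1)
  have hz' := hdiff z (Metric.mem_ball_self (by positivity))
  rw [fderiv_fun_sub hz'.2 hz'.1, fderiv_comp_add_right, add_sub_cancel, ← dist_eq_norm] at key
  refine key.trans_lt ?_
  rw [div_lt_iff₀ (by positivity)]
  nlinarith [mul_pos hε hδ]

lemma integrable_smul_of_continuous {E : Type*} [NormedAddCommGroup E] [NormedSpace ℝ E]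
    {χ : (Fin n → ℝ) → ℝ} (hχ : Continuous χ) (hχc : HasCompactSupport χ)
    {G : (Fin n → ℝ) → E} (hG : Continuous G) : Integrable (fun s => χ s • G s) :=
  (hχ.smul hG).integrable_of_hasCompactSupport hχc.smul_right

lemma hasFDerivAt_param {𝕜 : Type*} [RCLike 𝕜] [NormedSpace 𝕜 ℂ] [SMulCommClass 𝕜 ℝ ℂ]
    {H : Type*} [NormedAddCommGroup H] [NormedSpace 𝕜 H] [ProperSpace H]
    {O : Set H} (hO : IsOpen O) (G : H → (Fin n → ℝ) → ℂ) (G' : H → (Fin n → ℝ) → H →L[𝕜] ℂ)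
    (hG : ContinuousOn (fun p : H × (Fin n → ℝ) => G p.1 p.2) (O ×ˢ univ))
    (hG' : ContinuousOn (fun p : H × (Fin n → ℝ) => G' p.1 p.2) (O ×ˢ univ))
    (hd : ∀ x ∈ O, ∀ s, HasFDerivAt (fun x => G x s) (G' x s) x)
    {χ : (Fin n → ℝ) → ℝ} (hχ : Continuous χ) (hχc : HasCompactSupport χ) {x₀ : H} (hx : x₀ ∈ O) :
    HasFDerivAt (fun x => ∫ s, χ s • G x s) (∫ s, χ s • G' x₀ s) x₀ := by
  obtain ⟨δ, hδ, hsub⟩ := Metric.nhds_basis_closedBall.mem_iff.1 (hO.mem_nhds hx)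
  have hcomp : IsCompact (Metric.closedBall x₀ δ ×ˢ tsupport χ) :=
    (isCompact_closedBall _ _).prod hχc
  obtain ⟨C, hC⟩ := hcomp.exists_bound_of_continuousOn (hG'.mono (prod_mono hsub (subset_univ _)))
  have hGx : ∀ x ∈ O, Continuous (G x) := fun x hx =>
    hG.comp_continuous (f := fun s => (x, s)) (by fun_prop) (fun s => ⟨hx, trivial⟩)
  have hGx' : ∀ x ∈ O, Continuous (G' x) := fun x hx =>
    hG'.comp_continuous (f := fun s => (x, s)) (by fun_prop) (fun s => ⟨hx, trivial⟩)
  refine hasFDerivAt_integral_of_dominated_of_fderiv_le (bound := fun s => ‖χ s‖ * C)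
    (s := Metric.closedBall x₀ δ) (F' := fun x s => χ s • G' x s)
    (Metric.closedBall_mem_nhds _ hδ) ?_ ?_ ?_ ?_ ?_ ?_
  · filter_upwards [hO.mem_nhds hx] with x hx
    exact (hχ.smul (hGx x hx)).aestronglyMeasurable
  · exact integrable_smul_of_continuous hχ hχc (hGx x₀ hx)
  · exact (hχ.smul (hGx' x₀ hx)).aestronglyMeasurable
  · refine Eventually.of_forall fun s x hxs => ?_
    rw [norm_smul]
    by_cases hs : s ∈ tsupport χ
    · exact mul_le_mul_of_nonneg_left (hC (x, s) ⟨hxs, hs⟩) (norm_nonneg _)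
    · simp [image_eq_zero_of_notMem_tsupport hs]
  · exact (hχ.norm.integrable_of_hasCompactSupport hχc.norm).mul_const C
  · refine Eventually.of_forall fun s x hxs => ?_
    exact (hd x (hsub hxs) s).const_smul (χ s)

/-- sum of squares -/
noncomputable def sq (w : Fin n → ℂ) : ℂ := ∑ i, w i ^ 2

lemma differentiable_sq : Differentiable ℂ (sq : (Fin n → ℂ) → ℂ) := by
  unfold sq; fun_prop

lemma re_sq_le (w : Fin n → ℂ) : (sq w).re ≤ n * ‖reV w‖ ^ 2 - ‖imV w‖ ^ 2 := by
  have h1 : (sq w).re = ∑ i, (reV w i) ^ 2 - ∑ i, (imV w i) ^ 2 := by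
    rw [sq, Complex.re_sum, ← Finset.sum_sub_distrib]
    refine Finset.sum_congr rfl fun i _ => ?_
    simp [pow_two, reV, imV]
  have h2 : ∑ i, (reV w i) ^ 2 ≤ n * ‖reV w‖ ^ 2 := by
    calc ∑ i, (reV w i) ^ 2 ≤ ∑ i : Fin n, ‖reV w‖ ^ 2 := by
          refine Finset.sum_le_sum fun i _ => ?_
          rw [← sq_abs]
          exact pow_le_pow_left₀ (abs_nonneg _) (norm_le_pi_norm (reV w) i) 2
      _ = _ := by simp
  have h3 : ‖imV w‖ ^ 2 ≤ ∑ i, (imV w i) ^ 2 := by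
    have : ‖imV w‖ ≤ Real.sqrt (∑ i, (imV w i) ^ 2) := by
      refine (pi_norm_le_iff_of_nonneg (Real.sqrt_nonneg _)).2 fun i => ?_
      rw [Real.norm_eq_abs, ← Real.sqrt_sq_eq_abs]
      exact Real.sqrt_le_sqrt (Finset.single_le_sum (f := fun i => (imV w i) ^ 2)
        (fun i _ => sq_nonneg _) (Finset.mem_univ i))
    calc ‖imV w‖ ^ 2 ≤ Real.sqrt (∑ i, (imV w i) ^ 2) ^ 2 := pow_le_pow_left₀ (norm_nonneg _) this 2
      _ = _ := Real.sq_sqrt (Finset.sum_nonneg fun i _ => sq_nonneg _)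
  linarith

/-- The Gaussian kernel. -/
noncomputable def ker (σ : ℝ) (z w : Fin n → ℂ) : ℂ := Complex.exp (sq (z - w) / (σ : ℂ) ^ 2)

/-- The Gaussian average along the slice over `x`. -/
noncomputable def avg (f : (Fin n → ℂ) → ℂ) (σ : ℝ) (χ : (Fin n → ℝ) → ℝ) (z : Fin n → ℂ)
    (x : Fin n → ℝ) : ℂ := ∫ s, χ s • (ker σ z (cx x s) * f (cx x s))

lemma continuous_ker' {X : Type*} [TopologicalSpace X] (σ : ℝ) {a b : X → Fin n → ℂ}
    (ha : Continuous a) (hb : Continuous b) : Continuous fun t => ker σ (a t) (b t) := by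
  unfold ker
  refine Complex.continuous_exp.comp (Continuous.div_const ?_ _)
  exact (differentiable_sq (n := n)).continuous.comp (ha.sub hb)

lemma continuous_cx_right (x : Fin n → ℝ) : Continuous (cx x) :=
  continuous_cx.comp (by fun_prop : Continuous fun s => (x, s))

lemma continuous_slice {U : Set (Fin n → ℝ)} {E : Type*} [TopologicalSpace E] {f : (Fin n → ℂ) → E}
    (hf : ContinuousOn f (Tube U)) {x : Fin n → ℝ} (hx : x ∈ U) : Continuous fun s => f (cx x s) :=
  hf.comp_continuous (continuous_cx_right x) fun s => by simpa [mem_tube] using hx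

lemma avg_differentiable {U : Set (Fin n → ℝ)} {f : (Fin n → ℂ) → ℂ}
    (hf : DifferentiableOn ℂ f (Tube U)) (σ : ℝ) {χ : (Fin n → ℝ) → ℝ}
    (hχ : Continuous χ) (hχc : HasCompactSupport χ) {x : Fin n → ℝ} (hx : x ∈ U) :
    Differentiable ℂ (fun z => avg f σ χ z x) := by
  intro z
  have hfx := continuous_slice hf.continuousOn hx
  have hdiff : Differentiable ℂ (fun w : Fin n → ℂ => Complex.exp (sq w / (σ:ℂ)^2)) :=
    Differentiable.cexp (by
      have := differentiable_sq (n := n)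
      simp only [div_eq_mul_inv]
      fun_prop)
  obtain ⟨D, hD, hDd⟩ : ∃ D : (Fin n → ℂ) → (Fin n → ℂ) →L[ℂ] ℂ, Continuous D ∧
      ∀ w, HasFDerivAt (fun w : Fin n → ℂ => Complex.exp (sq w / (σ:ℂ)^2)) (D w) w := by
    refine ⟨fun w => fderiv ℂ (fun w => Complex.exp (sq w / (σ:ℂ)^2)) w, ?_,
      fun w => (hdiff w).hasFDerivAt⟩
    rw [← continuousOn_univ]
    exact continuousOn_fderiv isOpen_univ hdiff.differentiableOn
  have hcx := continuous_cx_right x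
  have h1 : Continuous fun p : (Fin n → ℂ) × (Fin n → ℝ) => ker σ p.1 (cx x p.2) * f (cx x p.2) := by
    refine Continuous.mul ?_ (hfx.comp continuous_snd)
    exact continuous_ker' σ continuous_fst (hcx.comp continuous_snd)
  have h2 : Continuous fun p : (Fin n → ℂ) × (Fin n → ℝ) => f (cx x p.2) • D (p.1 - cx x p.2) := by
    have e1 : Continuous fun p : (Fin n → ℂ) × (Fin n → ℝ) => f (cx x p.2) := hfx.comp continuous_snd
    have e2 : Continuous fun p : (Fin n → ℂ) × (Fin n → ℝ) => D (p.1 - cx x p.2) :=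
      hD.comp (continuous_fst.sub (hcx.comp continuous_snd))
    exact e1.smul e2
  have h3 : ∀ z ∈ (univ : Set (Fin n → ℂ)), ∀ s, HasFDerivAt (fun z => ker σ z (cx x s) * f (cx x s))
      (f (cx x s) • D (z - cx x s)) z := by
    intro z _ s
    have := (hDd (z - cx x s)).comp z ((hasFDerivAt_id z).sub_const (cx x s))
    have := this.mul_const (f (cx x s))
    rw [ContinuousLinearMap.comp_id] at this
    exact this
  have h4 := hasFDerivAt_param (𝕜 := ℂ) (n := n) (H := Fin n → ℂ) isOpen_univ
    (fun z s => ker σ z (cx x s) * f (cx x s))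
    (fun z s => f (cx x s) • D (z - cx x s)) h1.continuousOn h2.continuousOn h3 hχ hχc (mem_univ z)
  exact h4.differentiableAt

end approx

end Bochner

namespace Bochner

open Set Filter Topology MeasureTheory

section stokes
variable {n : ℕ}

/-- Real embedding as a continuous linear map. -/
noncomputable def reEmb : (Fin n → ℝ) →L[ℝ] (Fin n → ℂ) :=
  ContinuousLinearMap.pi fun i => Complex.ofRealCLM.comp (ContinuousLinearMap.proj i)

/-- Imaginary embedding as a continuous linear map. -/
noncomputable def imEmb : (Fin n → ℝ) →L[ℝ] (Fin n → ℂ) :=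
  Complex.I • reEmb

lemma cx_eq (x s : Fin n → ℝ) : cx x s = reEmb x + imEmb s := by
  ext i
  simp [cx_apply, reEmb, imEmb, mul_comm]

lemma slice_deriv {U : Set (Fin n → ℝ)} (hU : IsOpen U) {g : (Fin n → ℂ) → ℂ}
    (hg : DifferentiableOn ℂ g (Tube U)) {χ : (Fin n → ℝ) → ℝ} (hχ : ContDiff ℝ 1 χ)
    (hχc : HasCompactSupport χ) {x : Fin n → ℝ} (hx : x ∈ U) :
    ∃ L : (Fin n → ℝ) →L[ℝ] ℂ, HasFDerivAt (fun x => ∫ s, χ s • g (cx x s)) L x ∧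
      ∀ v, L v = Complex.I * ∫ s, (fderiv ℝ χ s v) • g (cx x s) := by
  have hgc := hg.continuousOn
  have hD := continuousOn_fderiv (isOpen_tube hU) hg
  obtain ⟨D, hDc, hDd⟩ : ∃ D : (Fin n → ℂ) → (Fin n → ℂ) →L[ℝ] ℂ, ContinuousOn D (Tube U) ∧
      ∀ w ∈ Tube U, HasFDerivAt g (D w) w ∧ ∀ v, D w (Complex.I • v) = Complex.I * D w v := by
    refine ⟨fun w => (fderiv ℂ g w).restrictScalars ℝ, ?_, fun w hw => ⟨?_, fun v => ?_⟩⟩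
    · exact (ContinuousLinearMap.restrictScalarsL ℂ (Fin n → ℂ) ℂ ℝ ℝ).continuous.comp_continuousOn hD
    · exact (hg.differentiableAt ((isOpen_tube hU).mem_nhds hw)).hasFDerivAt.restrictScalars ℝ
    · simp
  have hmap : MapsTo (fun p : (Fin n → ℝ) × (Fin n → ℝ) => cx p.1 p.2) (U ×ˢ univ) (Tube U) :=
    fun p hp => by simpa [mem_tube] using hp.1
  have hd : ∀ x ∈ U, ∀ s, HasFDerivAt (fun x => g (cx x s)) ((D (cx x s)).comp reEmb) x := by
    intro x hx s
    have h1 : HasFDerivAt (fun x => cx x s) (reEmb : (Fin n → ℝ) →L[ℝ] (Fin n → ℂ)) x := by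
      simp only [cx_eq]
      exact reEmb.hasFDerivAt.add_const _
    exact (hDd (cx x s) (by simpa [mem_tube] using hx)).1.comp x h1
  have hs : ∀ s, HasFDerivAt (fun s => g (cx x s)) ((D (cx x s)).comp imEmb) s := by
    intro s
    have h1 : HasFDerivAt (fun s => cx x s) (imEmb : (Fin n → ℝ) →L[ℝ] (Fin n → ℂ)) s := by
      simp only [cx_eq]
      exact imEmb.hasFDerivAt.const_add _
    exact (hDd (cx x s) (by simpa [mem_tube] using hx)).1.comp s h1
  have hc1 : ContinuousOn (fun p : (Fin n → ℝ) × (Fin n → ℝ) => g (cx p.1 p.2)) (U ×ˢ univ) :=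
    hgc.comp continuous_cx.continuousOn hmap
  have hc2 : ContinuousOn (fun p : (Fin n → ℝ) × (Fin n → ℝ) => (D (cx p.1 p.2)).comp reEmb)
      (U ×ˢ univ) :=
    (hDc.comp continuous_cx.continuousOn hmap).clm_comp continuousOn_const
  have hg1 : Continuous fun s => g (cx x s) := continuous_slice hgc hx
  have hD1 : Continuous fun s => D (cx x s) := continuous_slice hDc hx
  have key := hasFDerivAt_param (𝕜 := ℝ) (n := n) (H := Fin n → ℝ) hU (fun x s => g (cx x s))
    (fun x s => (D (cx x s)).comp reEmb) hc1 hc2 hd hχ.continuous hχc hx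
  refine ⟨_, key, fun v => ?_⟩
  have hint : Integrable fun s => χ s • (D (cx x s)).comp (reEmb : (Fin n → ℝ) →L[ℝ] (Fin n → ℂ)) :=
    integrable_smul_of_continuous hχ.continuous hχc (hD1.clm_comp continuous_const)
  rw [ContinuousLinearMap.integral_apply hint]
  have hχ' : Continuous fun s => fderiv ℝ χ s v :=
    (hχ.continuous_fderiv (by norm_num)).clm_apply continuous_const
  have hχc' : HasCompactSupport fun s => fderiv ℝ χ s v := hχc.fderiv_apply ℝ v
  have hfd : ∀ s, fderiv ℝ (fun s => g (cx x s)) s v = Complex.I * D (cx x s) (reEmb v) := by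
    intro s
    rw [(hs s).fderiv]
    simp only [ContinuousLinearMap.comp_apply, imEmb, smul_apply]
    exact (hDd (cx x s) (by simpa [mem_tube] using hx)).2 _
  have hDv : Continuous fun s => D (cx x s) (reEmb v) := hD1.clm_apply continuous_const
  have parts := integral_smul_fderiv_eq_neg_fderiv_smul_of_integrable (μ := (volume : Measure (Fin n → ℝ)))
    (f := χ) (g := fun s => g (cx x s)) (v := v)
    (integrable_smul_of_continuous hχ' hχc' hg1)
    (integrable_smul_of_continuous hχ.continuous hχc
      (by simp only [hfd]; exact continuous_const.mul hDv))
    (integrable_smul_of_continuous hχ.continuous hχc hg1)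
    (fun s _ => hχ.differentiable (by norm_num) s) (fun s _ => (hs s).differentiableAt)
  have h5 : ∫ s, (fderiv ℝ χ s v) • g (cx x s) = - (Complex.I * ∫ s, χ s • D (cx x s) (reEmb v)) := by
    rw [← neg_eq_iff_eq_neg, ← parts, ← integral_const_mul]
    congr 1
    ext s
    rw [hfd, mul_smul_comm]
  rw [h5, mul_neg, ← mul_assoc, Complex.I_mul_I]
  simp

/-- Two slices in `S` give the same Gaussian averages up to exponentially small errors. -/
def Good (f : (Fin n → ℂ) → ℂ) (S : Set (Fin n → ℝ)) : Prop :=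
  ∀ r : ℝ, ∃ R : ℝ, ∀ χ : (Fin n → ℝ) → ℝ, ContDiff ℝ 1 χ → HasCompactSupport χ →
    (∀ s, ‖s‖ < R → χ s = 1) → ∃ M : ℝ, ∀ σ : ℝ, 0 < σ → ∀ z : Fin n → ℂ, ‖z‖ ≤ r →
      ∀ x ∈ S, ∀ x' ∈ S, ‖avg f σ χ z x - avg f σ χ z x'‖ ≤ M * Real.exp (-(1 / σ ^ 2))

lemma Good.mono {f : (Fin n → ℂ) → ℂ} {S T : Set (Fin n → ℝ)} (h : Good f T) (hST : S ⊆ T) :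
    Good f S := by
  intro r
  obtain ⟨R, hR⟩ := h r
  refine ⟨R, fun χ h1 h2 h3 => ?_⟩
  obtain ⟨M, hM⟩ := hR χ h1 h2 h3
  exact ⟨M, fun σ hσ z hz x hx x' hx' => hM σ hσ z hz x (hST hx) x' (hST hx')⟩

lemma Good.union {f : (Fin n → ℂ) → ℂ} {S T : Set (Fin n → ℝ)} (h : Good f S) (h' : Good f T)
    {y : Fin n → ℝ} (hy : y ∈ S) (hy' : y ∈ T) : Good f (S ∪ T) := by
  intro r
  obtain ⟨R, hR⟩ := h r
  obtain ⟨R', hR'⟩ := h' r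
  refine ⟨max R R', fun χ h1 h2 h3 => ?_⟩
  obtain ⟨M, hM⟩ := hR χ h1 h2 fun s hs => h3 s (hs.trans_le (le_max_left _ _))
  obtain ⟨M', hM'⟩ := hR' χ h1 h2 fun s hs => h3 s (hs.trans_le (le_max_right _ _))
  refine ⟨2 * (|M| + |M'|), fun σ hσ z hz => ?_⟩
  have hy1 : ∀ x ∈ S ∪ T, ‖avg f σ χ z x - avg f σ χ z y‖ ≤
      (|M| + |M'|) * Real.exp (-(1 / σ ^ 2)) := by
    intro x hx
    rcases hx with hx | hx
    · refine (hM σ hσ z hz x hx y hy).trans ?_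
      gcongr
      linarith [le_abs_self M, abs_nonneg M']
    · refine (hM' σ hσ z hz x hx y hy').trans ?_
      gcongr
      linarith [le_abs_self M', abs_nonneg M]
  intro x hx x' hx'
  have e1 := hy1 x hx
  have e2 := hy1 x' hx'
  have : avg f σ χ z x - avg f σ χ z x' =
    (avg f σ χ z x - avg f σ χ z y) - (avg f σ χ z x' - avg f σ χ z y) := by ring
  rw [this]
  refine (norm_sub_le _ _).trans ?_
  linarith

lemma differentiable_ker (σ : ℝ) (z : Fin n → ℂ) : Differentiable ℂ (ker σ z) := by
  have h : Differentiable ℂ fun w : Fin n → ℂ => sq (z - w) :=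
    (differentiable_sq (n := n)).comp (differentiable_id.const_sub z)
  unfold ker
  simp only [div_eq_mul_inv]
  exact (h.mul_const _).cexp

lemma norm_ker (σ : ℝ) (z w : Fin n → ℂ) : ‖ker σ z w‖ = Real.exp ((sq (z - w)).re / σ ^ 2) := by
  rw [ker, Complex.norm_exp, ← Complex.ofReal_pow, Complex.div_ofReal_re]

lemma good_convex {U : Set (Fin n → ℝ)} (hU : IsOpen U) {f : (Fin n → ℂ) → ℂ}
    (hf : DifferentiableOn ℂ f (Tube U)) {C : Set (Fin n → ℝ)} (hC : IsCompact C)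
    (hCc : Convex ℝ C) (hCU : C ⊆ U) : Good f C := by
  intro r
  obtain ⟨ρ, hρ0, hρ⟩ : ∃ ρ : ℝ, 0 ≤ ρ ∧ ∀ x ∈ C, ‖x‖ ≤ ρ := by
    obtain ⟨ρ, hρ⟩ := hC.isBounded.exists_norm_le
    exact ⟨|ρ|, abs_nonneg _, fun x hx => (hρ x hx).trans (le_abs_self _)⟩
  set T : ℝ := n * (|r| + ρ) ^ 2 + 1 with hT
  have hT1 : 1 ≤ T := by
    have : (0:ℝ) ≤ n * (|r| + ρ) ^ 2 := by positivity
    linarith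
  refine ⟨|r| + T, fun χ hχ hχc hχ1 => ?_⟩
  obtain ⟨B, hB⟩ : ∃ B : ℝ, ∀ p ∈ C ×ˢ tsupport χ, ‖f (cx p.1 p.2)‖ ≤ B := by
    refine (hC.prod hχc).exists_bound_of_continuousOn
      (hf.continuousOn.comp continuous_cx.continuousOn ?_)
    intro p hp
    exact hCU hp.1
  set J : ℝ := ∫ s, ‖fderiv ℝ χ s‖ with hJ
  have hJint : Integrable fun s => ‖fderiv ℝ χ s‖ :=
    ((hχ.continuous_fderiv (by norm_num)).integrable_of_hasCompactSupport (hχc.fderiv ℝ)).norm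
  have hJ0 : 0 ≤ J := integral_nonneg fun s => norm_nonneg _
  refine ⟨J * |B| * (2 * ρ), fun σ hσ z hz x hx x' hx' => ?_⟩
  set e : ℝ := Real.exp (-(1 / σ ^ 2)) with he
  have he0 : 0 < e := Real.exp_pos _
  have hg : DifferentiableOn ℂ (fun w => ker σ z w * f w) (Tube U) :=
    (differentiable_ker σ z).differentiableOn.mul hf
  have hder : ∀ x ∈ C, ∃ L : (Fin n → ℝ) →L[ℝ] ℂ,
      HasFDerivAt (fun x => avg f σ χ z x) L x ∧ ‖L‖ ≤ J * |B| * e := by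
    intro x hx
    obtain ⟨L, hL, hLv⟩ := slice_deriv hU hg hχ hχc (hCU hx)
    refine ⟨L, hL, L.opNorm_le_bound (by positivity) fun v => ?_⟩
    rw [hLv, norm_mul, Complex.norm_I, one_mul]
    have hbd : ∀ s, ‖(fderiv ℝ χ s v) • (ker σ z (cx x s) * f (cx x s))‖ ≤
        ‖fderiv ℝ χ s‖ * (|B| * e * ‖v‖) := by
      intro s
      by_cases h1 : s ∈ tsupport χ
      · by_cases h2 : ‖s‖ < |r| + T
        · have : fderiv ℝ χ s = 0 := by
            have hev : χ =ᶠ[𝓝 s] fun _ => 1 := by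
              have hop : IsOpen {s : Fin n → ℝ | ‖s‖ < |r| + T} :=
                isOpen_lt continuous_norm continuous_const
              filter_upwards [hop.mem_nhds h2] with t ht
              exact hχ1 t ht
            rw [hev.fderiv_eq]; simp
          simp [this]
        · have hk : ‖ker σ z (cx x s)‖ ≤ e := by
            rw [norm_ker, he]
            apply Real.exp_le_exp.2
            have hre : (sq (z - cx x s)).re ≤ -1 := by
              refine (re_sq_le _).trans ?_
              rw [reV_sub, imV_sub, reV_cx, imV_cx]
              have hz' : ‖z‖ ≤ |r| := hz.trans (le_abs_self r)
              have a1 : ‖reV z - x‖ ≤ |r| + ρ :=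
                (norm_sub_le _ _).trans (add_le_add ((norm_reV_le z).trans hz') (hρ x hx))
              have a2 : T ≤ ‖imV z - s‖ := by
                have := norm_sub_norm_le s (imV z)
                rw [norm_sub_rev] at this
                have := (norm_imV_le z).trans hz'
                linarith [not_lt.1 h2]
              have a3 : (n:ℝ) * ‖reV z - x‖ ^ 2 ≤ n * (|r| + ρ) ^ 2 := by gcongr
              have a4 : T ≤ ‖imV z - s‖ ^ 2 := by nlinarith
              linarith
            rw [← neg_div]
            gcongr
          rw [norm_smul, norm_mul]
          have b1 := (fderiv ℝ χ s).le_opNorm v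
          have b2 : ‖f (cx x s)‖ ≤ |B| := (hB (x, s) ⟨hx, h1⟩).trans (le_abs_self B)
          calc ‖fderiv ℝ χ s v‖ * (‖ker σ z (cx x s)‖ * ‖f (cx x s)‖)
              ≤ (‖fderiv ℝ χ s‖ * ‖v‖) * (e * |B|) := by gcongr
            _ = _ := by ring
      · have : fderiv ℝ χ s = 0 := fderiv_of_notMem_tsupport ℝ h1
        simp [this]
    refine (norm_integral_le_of_norm_le (hJint.mul_const _) (Eventually.of_forall hbd)).trans ?_
    rw [integral_mul_const]
    exact le_of_eq (by ring)
  choose! L hL hLb using hder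
  have hmv := hCc.norm_image_sub_le_of_norm_hasFDerivWithin_le (𝕜 := ℝ)
    (f := fun x => avg f σ χ z x) (f' := L) (fun x hx => (hL x hx).hasFDerivWithinAt) hLb hx' hx
  refine hmv.trans ?_
  have : ‖x - x'‖ ≤ 2 * ρ := by
    linarith [norm_sub_le x x', hρ x hx, hρ x' hx']
  calc J * |B| * e * ‖x - x'‖ ≤ J * |B| * e * (2 * ρ) := by gcongr
    _ = _ := by ring

lemma good_compact {U : Set (Fin n → ℝ)} (hU : IsOpen U) (hc : IsConnected U)
    {f : (Fin n → ℂ) → ℂ} (hf : DifferentiableOn ℂ f (Tube U)) {x0 : Fin n → ℝ} (hx0 : x0 ∈ U)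
    {K : Set (Fin n → ℝ)} (hK : IsCompact K) (hKU : K ⊆ U) : Good f (insert x0 K) := by
  have hball : ∀ x ∈ U, ∃ N ∈ 𝓝 x, Good f N := by
    intro x hx
    obtain ⟨δ, hδ, hsub⟩ := Metric.nhds_basis_closedBall.mem_iff.1 (hU.mem_nhds hx)
    exact ⟨_, Metric.closedBall_mem_nhds x hδ,
      good_convex hU hf (isCompact_closedBall x δ) (convex_closedBall x δ) hsub⟩
  have hpair : ∀ x ∈ U, Good f {x0, x} := by
    intro x hx
    refine hc.isPreconnected.induction₂ (fun x y => Good f {x, y}) ?_ ?_ ?_ hx0 hx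
    · intro x hx
      obtain ⟨N, hN, hg⟩ := hball x hx
      filter_upwards [mem_nhdsWithin_of_mem_nhds hN] with y hy
      refine hg.mono ?_
      rintro t (rfl | rfl)
      · exact mem_of_mem_nhds hN
      · exact hy
    · intro x y z _ _ _ h1 h2
      refine (h1.union h2 (y := y) (by simp) (by simp)).mono ?_
      rintro t (rfl | rfl) <;> simp
    · intro x y _ _ h
      rwa [pair_comm]
  refine hK.induction_on (p := fun K => Good f (insert x0 K)) ?_ ?_ ?_ ?_
  · exact (hpair x0 hx0).mono (by simp)
  · intro s t hst h
    exact h.mono (insert_subset_insert hst)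
  · intro s t h1 h2
    refine (h1.union h2 (y := x0) (by simp) (by simp)).mono ?_
    rw [insert_union_distrib]
  · intro x hx
    obtain ⟨N, hN, hg⟩ := hball x (hKU hx)
    refine ⟨N, mem_nhdsWithin_of_mem_nhds hN, ?_⟩
    refine ((hpair x (hKU hx)).union hg (y := x) (by simp) (mem_of_mem_nhds hN)).mono ?_
    rintro t (rfl | ht)
    · simp
    · exact Or.inr ht

end stokes

end Bochner

namespace Bochner

open Set Filter Topology MeasureTheory

section final
variable {n : ℕ}

/-- The standard Gaussian weight. -/
noncomputable def gau (u : Fin n → ℝ) : ℝ := Real.exp (-∑ i, u i ^ 2)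

lemma gau_pos (u : Fin n → ℝ) : 0 < gau u := Real.exp_pos _

lemma continuous_gau : Continuous (gau : (Fin n → ℝ) → ℝ) := by
  unfold gau; fun_prop

lemma integrable_gau : Integrable (gau : (Fin n → ℝ) → ℝ) := by
  have h : Integrable (fun u : Fin n → ℝ => ∏ i, Real.exp (-1 * (u i) ^ 2)) :=
    Integrable.fintype_prod (f := fun (_ : Fin n) (x : ℝ) => Real.exp (-1 * x ^ 2))
      fun _ => integrable_exp_neg_mul_sq one_pos
  refine h.congr (Eventually.of_forall fun u => ?_)
  simp only [gau]
  rw [← Real.exp_sum]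
  simp

lemma integral_gau_pos : 0 < ∫ u : Fin n → ℝ, gau u :=
  integral_exp_pos integrable_gau

/-- The rescaled Gaussian average. -/
noncomputable def Phi (f : (Fin n → ℂ) → ℂ) (χ : (Fin n → ℝ) → ℝ) (σ : ℝ) (z : Fin n → ℂ) : ℂ :=
  ∫ u, gau u • (χ (imV z + σ • u) • f (cx (reV z) (imV z + σ • u)))

lemma avg_eq (f : (Fin n → ℂ) → ℂ) (χ : (Fin n → ℝ) → ℝ) {σ : ℝ} (hσ : 0 < σ) (z : Fin n → ℂ) :
    avg f σ χ z (reV z) = ((σ ^ n : ℝ) : ℂ) * Phi f χ σ z := by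
  set g : (Fin n → ℝ) → ℂ := fun s =>
    χ s • (ker σ z (cx (reV z) s) * f (cx (reV z) s)) with hg
  have h1 : avg f σ χ z (reV z) = ∫ s, g (imV z + s) := by
    rw [integral_add_left_eq_self g]; rfl
  have h2 := Measure.integral_comp_smul_of_nonneg (volume : Measure (Fin n → ℝ))
    (fun s => g (imV z + s)) σ (hR := hσ.le)
  have h3 : Phi f χ σ z = ∫ u, g (imV z + σ • u) := by
    unfold Phi
    congr 1
    ext u
    have : ker σ z (cx (reV z) (imV z + σ • u)) = (gau u : ℂ) := by
      unfold ker gau sq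
      rw [Complex.ofReal_exp]
      congr 1
      rw [Finset.sum_div]
      push_cast
      rw [← Finset.sum_neg_distrib]
      refine Finset.sum_congr rfl fun i _ => ?_
      have e : (z - cx (reV z) (imV z + σ • u)) i = -(σ * u i) * Complex.I := by
        apply Complex.ext <;> simp [cx, reV, imV]
      have hs : (σ : ℂ) ≠ 0 := by exact_mod_cast hσ.ne'
      rw [e]
      field_simp
      simp
    simp only [hg, this, Complex.real_smul]
    ring
  rw [h3, h2, h1, Module.finrank_fin_fun, Complex.real_smul, ← mul_assoc, ← Complex.ofReal_mul,
    mul_inv_cancel₀ (by positivity)]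
  simp

lemma phi_zero (f : (Fin n → ℂ) → ℂ) {χ : (Fin n → ℝ) → ℝ} {z : Fin n → ℂ}
    (h : χ (imV z) = 1) : Phi f χ 0 z = ((∫ u : Fin n → ℝ, gau u : ℝ) : ℂ) * f z := by
  unfold Phi
  simp only [zero_smul, add_zero, h, one_smul, cx_reV_imV]
  rw [integral_smul_const, Complex.real_smul]

lemma phi_continuous {U : Set (Fin n → ℝ)} {f : (Fin n → ℂ) → ℂ}
    (hf : ContinuousOn f (Tube U)) {χ : (Fin n → ℝ) → ℝ} (hχ : Continuous χ)
    (hχc : HasCompactSupport χ) {K : Set (Fin n → ℂ)} (hK : IsCompact K) (hKU : K ⊆ Tube U) :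
    Continuous fun p : ℝ × K => Phi f χ p.1 p.2 := by
  have hcU : ∀ (z : K) s, cx (reV (z : Fin n → ℂ)) s ∈ Tube U := fun z s => by
    simpa [mem_tube] using hKU z.2
  obtain ⟨B, hB⟩ := ((hK.image continuous_reV).prod hχc).exists_bound_of_continuousOn
    (f := fun p : (Fin n → ℝ) × (Fin n → ℝ) => χ p.2 • f (cx p.1 p.2)) (by
      refine ContinuousOn.smul (hχ.comp continuous_snd).continuousOn ?_
      refine hf.comp continuous_cx.continuousOn ?_
      rintro ⟨x, s⟩ ⟨⟨z, hz, rfl⟩, -⟩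
      exact hcU ⟨z, hz⟩ s)
  have hcont : Continuous fun q : (ℝ × K) × (Fin n → ℝ) =>
      gau q.2 • (χ (imV (q.1.2 : Fin n → ℂ) + q.1.1 • q.2) •
        f (cx (reV (q.1.2 : Fin n → ℂ)) (imV (q.1.2 : Fin n → ℂ) + q.1.1 • q.2))) := by
    have hz : Continuous fun q : (ℝ × K) × (Fin n → ℝ) => (q.1.2 : Fin n → ℂ) := by fun_prop
    have hs : Continuous fun q : (ℝ × K) × (Fin n → ℝ) =>
        imV (q.1.2 : Fin n → ℂ) + q.1.1 • q.2 :=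
      (continuous_imV.comp hz).add (by fun_prop)
    refine (continuous_gau.comp continuous_snd).smul ((hχ.comp hs).smul ?_)
    exact hf.comp_continuous (continuous_cx.comp ((continuous_reV.comp hz).prodMk hs))
      fun q => hcU _ _
  unfold Phi
  refine continuous_of_dominated (bound := fun u => gau u * |B|) ?_ ?_ ?_ ?_
  · intro p
    exact (hcont.comp (by fun_prop : Continuous fun u : Fin n → ℝ => (p, u))).aestronglyMeasurable
  · intro p
    refine Eventually.of_forall fun u => ?_
    rw [norm_smul, Real.norm_of_nonneg (gau_pos u).le]
    refine mul_le_mul_of_nonneg_left ?_ (gau_pos u).le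
    by_cases h : imV (p.2 : Fin n → ℂ) + p.1 • u ∈ tsupport χ
    · exact (hB (reV (p.2 : Fin n → ℂ), _) ⟨⟨_, p.2.2, rfl⟩, h⟩).trans (le_abs_self B)
    · rw [image_eq_zero_of_notMem_tsupport h]
      simp
  · exact integrable_gau.mul_const _
  · refine Eventually.of_forall fun u => ?_
    have hp : Continuous fun p : ℝ × K => (p, u) := continuous_id.prodMk continuous_const
    have h3 := hcont.comp hp
    simpa only [Function.comp_def] using h3

lemma phi_unif {U : Set (Fin n → ℝ)} {f : (Fin n → ℂ) → ℂ}
    (hf : ContinuousOn f (Tube U)) {χ : (Fin n → ℝ) → ℝ} (hχ : Continuous χ)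
    (hχc : HasCompactSupport χ) {K : Set (Fin n → ℂ)} (hK : IsCompact K) (hKU : K ⊆ Tube U)
    {ε : ℝ} (hε : 0 < ε) :
    ∀ᶠ σ in 𝓝 (0 : ℝ), ∀ z ∈ K, ‖Phi f χ σ z - Phi f χ 0 z‖ < ε := by
  have hc := phi_continuous hf hχ hχc hK hKU
  have : CompactSpace K := isCompact_iff_compactSpace.1 hK
  have := (isCompact_univ (X := K)).eventually_forall_of_forall_eventually (x₀ := (0 : ℝ))
    (P := fun σ z => ‖Phi f χ σ z - Phi f χ 0 z‖ < ε) (by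
      intro y _
      have h2 : Continuous fun p : ℝ × K => ‖Phi f χ p.1 p.2 - Phi f χ 0 p.2‖ :=
        (hc.sub (hc.comp (by fun_prop : Continuous fun p : ℝ × K => ((0 : ℝ), p.2)))).norm
      exact h2.continuousAt.eventually (gt_mem_nhds (by simpa using hε)))
  filter_upwards [this] with σ h z hz
  exact h ⟨z, hz⟩ (mem_univ _)

lemma tail_small (n : ℕ) :
    Tendsto (fun σ : ℝ => (σ ^ n)⁻¹ * Real.exp (-(1 / σ ^ 2))) (𝓝[>] 0) (𝓝 0) := by
  have h := (Real.tendsto_pow_mul_exp_neg_atTop_nhds_zero n).comp tendsto_inv_nhdsGT_zero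
  refine squeeze_zero' (g := fun σ : ℝ => (σ⁻¹) ^ n * Real.exp (-σ⁻¹)) ?_ ?_ h
  · filter_upwards [self_mem_nhdsWithin] with σ (hσ : 0 < σ)
    positivity
  · filter_upwards [Ioo_mem_nhdsGT (zero_lt_one' ℝ)] with σ hσ
    have h1 : 1 ≤ σ⁻¹ := (one_le_inv₀ hσ.1).2 hσ.2.le
    have h0 : 0 < σ := hσ.1
    rw [inv_pow]
    refine mul_le_mul_of_nonneg_left (Real.exp_le_exp.2 (neg_le_neg ?_)) (by positivity)
    rw [one_div, ← inv_pow]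
    nlinarith

lemma approx {U : Set (Fin n → ℝ)} (hU : IsOpen U) (hc : IsConnected U) {f : (Fin n → ℂ) → ℂ}
    (hf : DifferentiableOn ℂ f (Tube U)) (K : Set (Fin n → ℂ)) (hK : IsCompact K)
    (hKU : K ⊆ Tube U) (ε : ℝ) (hε : 0 < ε) :
    ∃ P : (Fin n → ℂ) → ℂ, Differentiable ℂ P ∧ ∀ z ∈ K, ‖P z - f z‖ ≤ ε := by
  obtain ⟨x0, hx0⟩ := hc.nonempty
  obtain ⟨r, hr⟩ := hK.isBounded.exists_norm_le
  have hK0 : reV '' K ⊆ U := by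
    rintro _ ⟨z, hz, rfl⟩
    exact hKU hz
  obtain ⟨R, hR⟩ := good_compact hU hc hf hx0 (hK.image continuous_reV) hK0 r
  let b : ContDiffBump (0 : Fin n → ℝ) :=
    ⟨max 1 (max R r), max 1 (max R r) + 1, by positivity, by linarith⟩
  have hb1 : ∀ s : Fin n → ℝ, ‖s‖ ≤ max R r → b s = 1 := fun s hs =>
    b.one_of_mem_closedBall (by
      rw [mem_closedBall_zero_iff]
      exact hs.trans (le_max_right _ _))
  have hbc : HasCompactSupport b := b.hasCompactSupport
  obtain ⟨M, hM⟩ := hR b b.contDiff hbc fun s hs => hb1 s (hs.le.trans (le_max_left _ _))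
  set c : ℝ := ∫ u : Fin n → ℝ, gau u with hcdef
  have hcpos : 0 < c := integral_gau_pos
  have e1 := (phi_unif hf.continuousOn b.continuous hbc hK hKU
    (by positivity : 0 < c * (ε / 2))).filter_mono (nhdsWithin_le_nhds (s := Ioi 0))
  have e2 : ∀ᶠ σ in 𝓝[>] (0 : ℝ), M * ((σ ^ n)⁻¹ * Real.exp (-(1 / σ ^ 2))) < c * (ε / 2) := by
    have := (tail_small n).const_mul M
    rw [mul_zero] at this
    exact this.eventually (gt_mem_nhds (by positivity))
  obtain ⟨σ, ⟨h1, h2⟩, hσ⟩ := ((e1.and e2).and self_mem_nhdsWithin).exists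
  have hσ : 0 < σ := hσ
  refine ⟨fun z => ((c * σ ^ n : ℝ) : ℂ)⁻¹ * avg f σ b z x0,
    (avg_differentiable hf σ b.continuous hbc hx0).const_mul _, fun z hz => ?_⟩
  have hp0 := phi_zero f (χ := b) (z := z)
    (hb1 _ (((norm_imV_le z).trans (hr z hz)).trans (le_max_right _ _)))
  have hav := avg_eq f b hσ z
  have hd := hM σ hσ z (hr z hz) x0 (mem_insert _ _) (reV z)
    (mem_insert_of_mem _ (mem_image_of_mem _ hz))
  have h1z := h1 z hz
  rw [← hcdef] at hp0
  have hcC : (c : ℂ) ≠ 0 := by exact_mod_cast hcpos.ne'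
  have hσC : (σ : ℂ) ≠ 0 := by exact_mod_cast hσ.ne'
  have key : ((c * σ ^ n : ℝ) : ℂ)⁻¹ * avg f σ b z x0 - f z
      = (c : ℂ)⁻¹ * (((σ ^ n : ℝ) : ℂ)⁻¹ * (avg f σ b z x0 - avg f σ b z (reV z))
        + (Phi f b σ z - Phi f b 0 z)) := by
    rw [hav, hp0]
    push_cast
    field_simp
    ring
  rw [key, norm_mul, norm_inv, Complex.norm_real, Real.norm_of_nonneg hcpos.le,
    inv_mul_le_iff₀ hcpos]
  have hn : ‖((σ ^ n : ℝ) : ℂ)⁻¹ * (avg f σ b z x0 - avg f σ b z (reV z))‖ ≤ c * (ε / 2) := by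
    rw [norm_mul, norm_inv, Complex.norm_real, Real.norm_of_nonneg (by positivity)]
    calc (σ ^ n)⁻¹ * _ ≤ (σ ^ n)⁻¹ * (M * Real.exp (-(1 / σ ^ 2))) := by gcongr
      _ = M * ((σ ^ n)⁻¹ * Real.exp (-(1 / σ ^ 2))) := by ring
      _ ≤ _ := h2.le
  calc _ ≤ _ := norm_add_le _ _
    _ ≤ c * (ε / 2) + c * (ε / 2) := add_le_add hn h1z.le
    _ = c * ε := by ring

end final

end Bochner

/-- Bochner's tube theorem: a function holomorphic on the tube over a connected open set
`U ⊆ ℝⁿ` extends holomorphically to the tube over the convex hull of `U`. -/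
theorem bochner_tube_theorem (n : ℕ) (hn : 1 ≤ n) (U : Set (Fin n → ℝ))
    (hU_open : IsOpen U) (hU_conn : IsConnected U)
    (f : (Fin n → ℂ) → ℂ) (hf : DifferentiableOn ℂ f (Tube U)) :
    ∃ F : (Fin n → ℂ) → ℂ,
      DifferentiableOn ℂ F (Tube (convexHull ℝ U)) ∧ Set.EqOn F f (Tube U) := by
  exact Bochner.extend_of_approx hU_open hU_conn f (Bochner.approx hU_open hU_conn hf)
end

section
/- Let w, z be complex numbers with Re(w) > 1/2 and Re(w+z) > 1. Then the double series ∑_{m,k} μ(k)·m^{−w}·k^{−z}, taken over all pairs of odd positive integers (m, k) such that m·k is a perfect square, converges absolutely and equals ζ(2w)·(1−2^{−2w}) / ( ζ(w+z)·(1−2^{−(w+z)}) ), where μ is the Möbius function and ζ the Riemann zeta function. -/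
open Complex

lemma aux_L2 (s : ℂ) (hs : 1 < s.re) :
    LSeries (fun n : ℕ => (1 : DirichletCharacter ℂ 2) n) s = riemannZeta s * (1 - (2 : ℂ) ^ (-s)) := by
  have h1 : s ≠ 1 := by
    rintro rfl
    simp at hs
  rw [← DirichletCharacter.LFunction_eq_LSeries _ hs]
  have := DirichletCharacter.LFunctionTrivChar_eq_mul_riemannZeta (N := 2) h1
  rw [DirichletCharacter.LFunctionTrivChar] at this
  rw [this, Nat.Prime.primeFactors Nat.prime_two]
  simp [mul_comm]

lemma aux_chi_odd {n : ℕ} (hn : Odd n) : (1 : DirichletCharacter ℂ 2) n = 1 := by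
  apply MulChar.one_apply
  rw [ZMod.isUnit_iff_coprime]
  exact hn.coprime_two_right

lemma aux_chi_even {n : ℕ} (hn : ¬ Odd n) : (1 : DirichletCharacter ℂ 2) n = 0 := by
  apply MulChar.map_nonunit
  rw [ZMod.isUnit_iff_coprime, Nat.coprime_two_right]
  exact hn

lemma aux_term {a k : ℕ} (ha : Odd a) (hk : Odd k) (w z : ℂ) (c : ℂ) :
    c * ((a ^ 2 * k : ℕ) : ℂ) ^ (-w) * (k : ℂ) ^ (-z)
      = 1 / (a : ℂ) ^ (2 * w) * (c / (k : ℂ) ^ (w + z)) := by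
  have hk0 : (k : ℂ) ≠ 0 := by exact_mod_cast hk.pos.ne'
  have h1 : (a : ℂ) ^ (2 * w) = ((a ^ 2 : ℕ) : ℂ) ^ w := by
    have := Complex.natCast_mul_natCast_cpow a a w
    have ha0 : (a : ℂ) ≠ 0 := by exact_mod_cast ha.pos.ne'
    rw [two_mul, Complex.cpow_add _ _ ha0, ← this]
    push_cast
    rw [sq]
  rw [Nat.cast_mul, Complex.natCast_mul_natCast_cpow, h1, Complex.cpow_add _ _ hk0,
    Complex.cpow_neg, Complex.cpow_neg, Complex.cpow_neg]
  simp only [one_div, div_eq_mul_inv, mul_inv]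
  ring

/-- The double series `∑ μ(k) m^{-w} k^{-z}` over pairs of odd positive integers `(m, k)` with
`m·k` a perfect square converges absolutely and equals `ζ^{(2)}(2w)/ζ^{(2)}(w+z)`. -/
theorem moebius_square_double_series (w z : ℂ) (hw : 1 / 2 < w.re) (hwz : 1 < (w + z).re) :
    Summable (fun p : {q : ℕ × ℕ // Odd q.1 ∧ Odd q.2 ∧ IsSquare (q.1 * q.2)} =>
      ((ArithmeticFunction.moebius p.val.2 : ℤ) : ℂ)
        * (p.val.1 : ℂ) ^ (-w) * (p.val.2 : ℂ) ^ (-z)) ∧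
    (∑' p : {q : ℕ × ℕ // Odd q.1 ∧ Odd q.2 ∧ IsSquare (q.1 * q.2)},
      ((ArithmeticFunction.moebius p.val.2 : ℤ) : ℂ)
        * (p.val.1 : ℂ) ^ (-w) * (p.val.2 : ℂ) ^ (-z))
      = riemannZeta (2 * w) * (1 - (2 : ℂ) ^ (-(2 * w)))
        / (riemannZeta (w + z) * (1 - (2 : ℂ) ^ (-(w + z)))) := by
  have h2w : 1 < (2 * w).re := by
    simp only [mul_re, re_ofNat, im_ofNat, zero_mul, sub_zero]
    linarith
  set χ : DirichletCharacter ℂ 2 := 1 with hχ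
  have hA := DirichletCharacter.LSeriesSummable_of_one_lt_re χ h2w
  have hB := DirichletCharacter.LSeriesSummable_mul χ
    (ArithmeticFunction.LSeriesSummable_moebius_iff.mpr hwz)
  have hinv := DirichletCharacter.LSeries.mul_mu_eq_one χ hwz
  have hne := DirichletCharacter.LSeries_ne_zero_of_one_lt_re χ hwz
  have hprod := (hA.LSeriesHasSum).mul (hB.LSeriesHasSum)
    (summable_mul_of_summable_norm hA.norm hB.norm)
  rw [eq_inv_of_mul_eq_one_right hinv, hχ, aux_L2 _ h2w, aux_L2 _ hwz, ← div_eq_mul_inv] at hprod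
  have hS := (hasSum_subtype_iff_of_support_subset
    (s := {q : ℕ × ℕ | Odd q.1 ∧ Odd q.2}) (by
      intro q hq
      by_contra hcon
      apply hq
      rw [Set.mem_ofPred_eq, not_and_or] at hcon
      rcases hcon with h | h
      · simp [LSeries.term_def, aux_chi_even h]
      · simp [LSeries.term_def, aux_chi_even h])).mpr hprod
  let φ : {q : ℕ × ℕ | Odd q.1 ∧ Odd q.2} →
      {q : ℕ × ℕ // Odd q.1 ∧ Odd q.2 ∧ IsSquare (q.1 * q.2)} :=
    fun p => ⟨(p.1.1 ^ 2 * p.1.2, p.1.2), (p.2.1.pow).mul p.2.2, p.2.2,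
      ⟨p.1.1 * p.1.2, by ring⟩⟩
  have hφ : Function.Injective φ := by
    rintro ⟨⟨a, k⟩, ha, hk⟩ ⟨⟨b, l⟩, hb, hl⟩ h
    simp only [φ, Subtype.mk.injEq, Prod.mk.injEq] at h
    obtain ⟨h1, rfl⟩ := h
    have h3 := Nat.eq_of_mul_eq_mul_right hk.pos h1
    have h4 : a = b := Nat.pow_left_injective (n := 2) (by norm_num) h3
    subst h4
    rfl
  have hF : HasSum (fun p : {q : ℕ × ℕ // Odd q.1 ∧ Odd q.2 ∧ IsSquare (q.1 * q.2)} =>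
      ((ArithmeticFunction.moebius p.val.2 : ℤ) : ℂ)
        * (p.val.1 : ℂ) ^ (-w) * (p.val.2 : ℂ) ^ (-z))
      (riemannZeta (2 * w) * (1 - (2 : ℂ) ^ (-(2 * w)))
        / (riemannZeta (w + z) * (1 - (2 : ℂ) ^ (-(w + z))))) := by
    rw [← hφ.hasSum_iff]
    · refine (congrArg (fun f => HasSum f _) (funext fun p => ?_)).mpr hS
      obtain ⟨⟨a, k⟩, ha, hk⟩ := p
      simp only [φ, Function.comp_apply, LSeries.term_def, Pi.mul_apply, aux_chi_odd ha,
        aux_chi_odd hk, if_neg ha.pos.ne', if_neg hk.pos.ne', one_mul]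
      exact aux_term ha hk w z _
    · rintro ⟨⟨m, k⟩, hm, hk, ⟨c, hc⟩⟩ hr
      by_cases hsq : Squarefree k
      · exfalso
        apply hr
        simp only at hm hk hc
        have hdc : k ∣ c := (hsq.dvd_pow_iff_dvd (n := 2) (by norm_num)).mp
          ⟨m, by rw [sq, ← hc, mul_comm]⟩
        obtain ⟨d, rfl⟩ := hdc
        have hmd : m = d ^ 2 * k := by
          apply Nat.eq_of_mul_eq_mul_right hk.pos
          rw [hc]
          ring
        have hd : Odd d := by
          rw [hmd, Nat.odd_mul] at hm
          exact Nat.Odd.of_mul_left (n := d) (by rw [← sq]; exact hm.1)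
        refine ⟨⟨(d, k), hd, hk⟩, ?_⟩
        simp [φ, hmd]
      · simp [ArithmeticFunction.moebius_eq_zero_of_not_squarefree hsq]
  exact ⟨hF.summable, hF.tsum_eq⟩
end
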